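/- In the finite multinode multistage setting (nodes N, arcs A, hours H, incidence matrix M, horizon T, stagewise-independent finite noise types Ξ with weights q t summing to 1, nodal states S i, nonempty controls U i, dynamics f t i, nonnegative costs c t i, bounded balance maps b t i, nonnegative terminal costs K i, nonempty bounded arc-flow set B, nonnegative transport costs τ t), define the global multistage stochastic problem value G(s⁰) at an initial state s⁰ : Π i, S i as the infimum, over all hazard-decision policies assigning to each stage t and each noise history (ξ_0,…,ξ_t) nodal recourse controls u t i ∈ U i and arc flows r t ∈ B satisfying, for every node i, the coupling constraint b t i (ξ_t) (u t i) = (M (r t)) i, of the expected total cost ∑ over scenarios (weighted by ∏_t q t (ξ t)) of ∑_{t} (∑_{i} c t i (x t i) (ξ t) (u t i) + τ t (r t)) + ∑_{i} K i (x T i), where x 0 i = s⁰ i and x (t+1) i = f t i (x t i) (ξ t) (u t i). Let p : Fin T → N → H → ℝ be any deterministic price process, V^i the nodal price cost-to-go recursions and V^A the transport price cost-to-go values as above. Then ∑_{i} V^i 0 (s⁰ i) + V^A 0 ≤ G(s⁰). -/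

import Mathlib

/-!
Fix a feasible policy and write `x t` for its state trajectory, `𝔼` for the sum over scenarios
weighted by `∏ t, q t (ξ t)`, and `W t = ∑ i, V i t (x t i) + VA t`. The key inequality is
`𝔼 (W t) ≤ 𝔼 (stage cost at t) + 𝔼 (W (t + 1))`. Since `x t` depends only on the noise before
stage `t` (`mtraj_congr`), averaging over the `t`-th coordinate (`sum_weight_resample`)
identifies `𝔼 (V i t (x t i))` with the expectation of the infimum in the Bellman recursion taken
at the actual noise `ξ t`, and the policy's control is a candidate for that infimum; likewise the
policy's flow is a candidate for the transport infimum. Adding the two, the price terms cancel by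
the coupling constraint. Telescoping over the stages (`le_sum_add_last`) gives the bound.

The infima are real-valued, hence only meaningful when bounded below; this follows from the
nonnegativity of the costs and the boundedness of `b` and `B` (`exists_lower_bound_value`).
-/

/-- The nodal state trajectories generated from initial states `s` by nodal
controls `u` under the noise scenario `ξ` through the nodal dynamics `f`. -/
def mtraj {T : ℕ} {N : Type*} {S : N → Type*} {Ξ : Type*} {U : N → Type*}
    (f : ∀ t : Fin T, ∀ i : N, S i → Ξ → U i → S i)
    (s : ∀ i, S i) (ξ : Fin T → Ξ) (u : ∀ _ : Fin T, ∀ i, U i) : ℕ → ∀ i, S i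
  | 0 => s
  | Nat.succ t =>
    if h : t < T then
      fun i => f ⟨t, h⟩ i (mtraj f s ξ u t i) (ξ ⟨t, h⟩) (u ⟨t, h⟩ i)
    else mtraj f s ξ u t

/-- Resampling the noise of a single stage `t` from its own law leaves the law of the scenario
unchanged, because the weights form a product. -/
lemma sum_weight_resample {T : ℕ} {Ξ : Type*} [Fintype Ξ]
    (q : Fin T → Ξ → ℝ) (hq1 : ∀ t, ∑ ξ, q t ξ = 1) (t : Fin T) (φ : (Fin T → Ξ) → ℝ) :
    ∑ ξ : Fin T → Ξ, (∏ k, q k (ξ k)) * φ ξ =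
      ∑ ξ : Fin T → Ξ, (∏ k, q k (ξ k)) * ∑ e, q t e * φ (Function.update ξ t e) := by
  have hw : ∀ (ξ : Fin T → Ξ) (e : Ξ),
      (∏ k, q k (ξ k)) * q t e = (∏ k, q k (Function.update ξ t e k)) * q t (ξ t) := by
    intro ξ e
    rw [← Finset.mul_prod_erase Finset.univ _ (Finset.mem_univ t),
      ← Finset.mul_prod_erase Finset.univ (fun k => q k (Function.update ξ t e k))
        (Finset.mem_univ t)]
    have : ∏ k ∈ Finset.univ.erase t, q k (Function.update ξ t e k)
        = ∏ k ∈ Finset.univ.erase t, q k (ξ k) := by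
      refine Finset.prod_congr rfl fun k hk => ?_
      rw [Function.update_of_ne (Finset.ne_of_mem_erase hk)]
    rw [this, Function.update_self]
    ring
  -- Exchanging `ξ t` with the fresh sample is an involution of the pairs `(ξ, e)`.
  let swap : (Fin T → Ξ) × Ξ → (Fin T → Ξ) × Ξ := fun z => (Function.update z.1 t z.2, z.1 t)
  have hswap : Function.Involutive swap := by
    rintro ⟨ξ, e⟩
    simp [swap]
  calc ∑ ξ : Fin T → Ξ, (∏ k, q k (ξ k)) * φ ξ
      = ∑ z : (Fin T → Ξ) × Ξ, (∏ k, q k (z.1 k)) * q t z.2 * φ z.1 := by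
        rw [Fintype.sum_prod_type]
        refine Finset.sum_congr rfl fun ξ _ => ?_
        simp only [← Finset.sum_mul, ← Finset.mul_sum, hq1, mul_one]
    _ = ∑ z : (Fin T → Ξ) × Ξ, (∏ k, q k ((swap z).1 k)) * q t (swap z).2 * φ (swap z).1 :=
        (Equiv.sum_comp hswap.toPerm
          (fun z : (Fin T → Ξ) × Ξ => (∏ k, q k (z.1 k)) * q t z.2 * φ z.1)).symm
    _ = _ := by
        rw [Fintype.sum_prod_type]
        refine Finset.sum_congr rfl fun ξ _ => ?_
        rw [Finset.mul_sum]
        refine Finset.sum_congr rfl fun e _ => ?_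
        simp only [swap]
        rw [← hw ξ e, mul_assoc]

lemma sum_weight_eq_one {T : ℕ} {Ξ : Type*} [Fintype Ξ]
    (q : Fin T → Ξ → ℝ) (hq1 : ∀ t, ∑ ξ, q t ξ = 1) :
    ∑ ξ : Fin T → Ξ, ∏ k, q k (ξ k) = 1 := by
  classical
  rw [← Fintype.piFinset_univ, ← Finset.prod_univ_sum]
  simp [hq1]

/-- The state at time `n` depends only on the noise and the controls at stages before `n`. -/
lemma mtraj_congr {T : ℕ} {N : Type*} {S : N → Type*} {Ξ : Type*} {U : N → Type*}
    (f : ∀ t : Fin T, ∀ i : N, S i → Ξ → U i → S i) (s : ∀ i, S i)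
    (ξ ξ' : Fin T → Ξ) (u u' : ∀ _ : Fin T, ∀ i, U i) (n : ℕ)
    (hξ : ∀ k : Fin T, (k : ℕ) < n → ξ k = ξ' k)
    (hu : ∀ k : Fin T, (k : ℕ) < n → u k = u' k) :
    mtraj f s ξ u n = mtraj f s ξ' u' n := by
  induction n with
  | zero => rfl
  | succ n ih =>
    have h := ih (fun k hk => hξ k (by omega)) (fun k hk => hu k (by omega))
    by_cases hn : n < T
    · simp only [mtraj, hn, dif_pos, h, hξ ⟨n, hn⟩ (Nat.lt_succ_self n),
        hu ⟨n, hn⟩ (Nat.lt_succ_self n)]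
    · simp only [mtraj, hn, dif_neg, h, not_false_eq_true]

lemma mtraj_succ {T : ℕ} {N : Type*} {S : N → Type*} {Ξ : Type*} {U : N → Type*}
    (f : ∀ t : Fin T, ∀ i : N, S i → Ξ → U i → S i) (s : ∀ i, S i)
    (ξ : Fin T → Ξ) (u : ∀ _ : Fin T, ∀ i, U i) (t : Fin T) (i : N) :
    mtraj f s ξ u (t + 1) i = f t i (mtraj f s ξ u t i) (ξ t) (u t i) := by
  simp [mtraj]

lemma le_sum_add_last {T : ℕ} (a : Fin (T + 1) → ℝ) (g : Fin T → ℝ)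
    (h : ∀ t : Fin T, a t.castSucc ≤ g t + a t.succ) :
    a 0 ≤ ∑ t, g t + a (Fin.last T) := by
  induction T with
  | zero => simp
  | succ T ih =>
    have h1 := ih (fun t => a t.succ) (fun t => g t.succ) (fun t => h t.succ)
    have h2 := h 0
    rw [Fin.sum_univ_succ]
    simp only [Fin.castSucc_zero, Fin.succ_last] at h1 h2
    linarith

lemma neg_sum_abs_mul_le {H : Type*} [Fintype H] (p b : H → ℝ) {C : ℝ}
    (hb : ∀ h, |b h| ≤ C) : -∑ h, |p h| * C ≤ ∑ h, p h * b h := by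
  rw [← Finset.sum_neg_distrib]
  refine Finset.sum_le_sum fun h _ => ?_
  have h1 : |p h * b h| ≤ |p h| * C := by
    rw [abs_mul]
    exact mul_le_mul_of_nonneg_left (hb h) (abs_nonneg _)
  exact (abs_le.mp h1).1

/-- The nodal value functions are bounded below uniformly in the state: each stage adds a
nonnegative cost and a bounded price term. -/
lemma exists_lower_bound_value {H : Type*} [Fintype H] {T : ℕ} {Ξ : Type*} [Fintype Ξ]
    (q : Fin T → Ξ → ℝ) (hq0 : ∀ t ξ, 0 ≤ q t ξ) (hq1 : ∀ t, ∑ ξ, q t ξ = 1)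
    {S U : Type*} [Nonempty U] (f : Fin T → S → Ξ → U → S) (c : Fin T → S → Ξ → U → ℝ)
    (hc : ∀ t s ξ u, 0 ≤ c t s ξ u) (b : Fin T → Ξ → U → H → ℝ)
    (C : ℝ) (hb : ∀ t ξ u h, |b t ξ u h| ≤ C)
    (K : S → ℝ) (hK : ∀ s, 0 ≤ K s) (p : Fin T → H → ℝ)
    (V : Fin (T + 1) → S → ℝ) (hVT : ∀ s, V (Fin.last T) s = K s)
    (hV : ∀ (t : Fin T) (s : S), V t.castSucc s = ∑ ξ : Ξ, q t ξ *
      (⨅ a : U, (c t s ξ a + (∑ h, p t h * b t ξ a h) + V t.succ (f t s ξ a))))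
    (t : Fin (T + 1)) : ∃ L : ℝ, ∀ s, L ≤ V t s := by
  induction t using Fin.reverseInduction with
  | last => exact ⟨0, fun s => (hVT s).symm ▸ hK s⟩
  | cast t ih =>
    obtain ⟨L, hL⟩ := ih
    refine ⟨-(∑ h, |p t h| * C) + L, fun s => ?_⟩
    rw [hV]
    calc -(∑ h, |p t h| * C) + L = ∑ ξ : Ξ, q t ξ * (-(∑ h, |p t h| * C) + L) := by
          rw [← Finset.sum_mul Finset.univ (q t), hq1, one_mul]
      _ ≤ _ := by
          refine Finset.sum_le_sum fun ξ _ => mul_le_mul_of_nonneg_left ?_ (hq0 t ξ)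
          refine le_ciInf fun a => ?_
          have h1 := neg_sum_abs_mul_le (p t) (b t ξ a) (hb t ξ a)
          have h2 := hc t s ξ a
          have h3 := hL (f t s ξ a)
          linarith

/-- Proposition 1 of the paper (finitely supported stagewise-independent noise):
for any deterministic price decomposition process `p`, the sum of the initial
nodal price cost-to-go functions and the arc (transport) price value provides a
lower bound for the global multistage stochastic optimization problem with
spatial coupling constraints, whose value `G(s⁰)` is the infimum, over all
hazard-decision (nonanticipative) policies producing nodal recourse controls
and admissible arc flows satisfying the hourly coupling constraint
`b t i (ξ t) (u t i) = (M (r t)) i`, of the expected total cost (a scenario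
`ξ : Fin T → Ξ` having weight `∏ t, q t (ξ t)`); the infimum is taken in the
extended reals, being `+∞` if no feasible policy exists. -/
theorem nodal_plus_transport_le_global_value
    {N A H : Type*} [Fintype N] [Nonempty N] [Fintype A] [Nonempty A]
    [Fintype H] [Nonempty H]
    (M : Matrix N A ℝ)
    {T : ℕ} {Ξ : Type*} [Fintype Ξ] [Nonempty Ξ]
    (q : Fin T → Ξ → ℝ) (hq0 : ∀ t ξ, 0 ≤ q t ξ) (hq1 : ∀ t, ∑ ξ, q t ξ = 1)
    {S : N → Type*} {U : N → Type*} [∀ i, Nonempty (U i)]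
    (f : ∀ t : Fin T, ∀ i : N, S i → Ξ → U i → S i)
    (c : ∀ t : Fin T, ∀ i : N, S i → Ξ → U i → ℝ)
    (hc : ∀ t i si ξ u, 0 ≤ c t i si ξ u)
    (b : ∀ t : Fin T, ∀ i : N, Ξ → U i → H → ℝ)
    (hb : ∃ C : ℝ, ∀ t i ξ u h, |b t i ξ u h| ≤ C)
    (K : ∀ i : N, S i → ℝ) (hK : ∀ i si, 0 ≤ K i si)
    (B : Set (A → H → ℝ)) (hBne : B.Nonempty)
    (hBbd : ∃ C : ℝ, ∀ r ∈ B, ∀ a h, |r a h| ≤ C)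
    (τ : Fin T → (A → H → ℝ) → ℝ) (hτ : ∀ t r, 0 ≤ τ t r)
    (p : Fin T → N → H → ℝ)
    -- the nodal price cost-to-go recursions
    (V : ∀ i : N, Fin (T + 1) → S i → ℝ)
    (hVT : ∀ i si, V i (Fin.last T) si = K i si)
    (hV : ∀ (i : N) (t : Fin T) (si : S i),
      V i t.castSucc si = ∑ ξ : Ξ, q t ξ *
        (⨅ a : U i, (c t i si ξ a + (∑ h, p t i h * b t i ξ a h)
          + V i t.succ (f t i si ξ a))))
    -- the transport price cost-to-go values
    (VA : Fin (T + 1) → ℝ)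
    (hVAT : VA (Fin.last T) = 0)
    (hVA : ∀ t : Fin T,
      VA t.castSucc =
        (⨅ r : ↥B, (τ t r.val - ∑ i, ∑ h, p t i h * ∑ a, M i a * r.val a h))
          + VA t.succ)
    (s0 : ∀ i, S i) :
    (((∑ i, V i 0 (s0 i)) + VA 0 : ℝ) : EReal) ≤
      ⨅ π : {π : Fin T → (Fin T → Ξ) → ((∀ i, U i) × (A → H → ℝ)) //
          (∀ (t : Fin T) (ξ ξ' : Fin T → Ξ),
            (∀ i ≤ t, ξ i = ξ' i) → π t ξ = π t ξ') ∧
          (∀ (t : Fin T) (ξ : Fin T → Ξ), (π t ξ).2 ∈ B) ∧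
          (∀ (t : Fin T) (ξ : Fin T → Ξ) (i : N) (h : H),
            b t i (ξ t) ((π t ξ).1 i) h = ∑ a, M i a * (π t ξ).2 a h)},
        ((∑ ξ : Fin T → Ξ, (∏ t, q t (ξ t)) *
          ((∑ t : Fin T,
              ((∑ i, c t i (mtraj f s0 ξ (fun t' => (π.val t' ξ).1) t i)
                  (ξ t) ((π.val t ξ).1 i))
                + τ t (π.val t ξ).2))
            + ∑ i, K i (mtraj f s0 ξ (fun t' => (π.val t' ξ).1) T i)) : ℝ) : EReal) := by
  classical
  refine le_iInf fun ⟨π, hna, hπB, hcpl⟩ => EReal.coe_le_coe_iff.mpr ?_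
  obtain ⟨C, hC⟩ := hb
  obtain ⟨D, hD⟩ := hBbd
  have hVbd : ∀ i t, ∃ L : ℝ, ∀ si, L ≤ V i t si := fun i t =>
    exists_lower_bound_value q hq0 hq1 (fun t => f t i) (fun t => c t i)
      (fun t => hc t i) (fun t => b t i) C (fun t => hC t i) (K i) (hK i) (fun t => p t i)
      (V i) (hVT i) (hV i) t
  -- The Bellman infimum is at most its value at any control.
  have hnode : ∀ i (t : Fin T) si ξ a,
      (⨅ a : U i, (c t i si ξ a + (∑ h, p t i h * b t i ξ a h) + V i t.succ (f t i si ξ a)))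
        ≤ c t i si ξ a + (∑ h, p t i h * b t i ξ a h) + V i t.succ (f t i si ξ a) := by
    intro i t si ξ a
    obtain ⟨L, hL⟩ := hVbd i t.succ
    refine ciInf_le (f := fun a => c t i si ξ a + (∑ h, p t i h * b t i ξ a h)
      + V i t.succ (f t i si ξ a)) ⟨-(∑ h, |p t i h| * C) + L, ?_⟩ a
    rintro _ ⟨a, rfl⟩
    have h1 := neg_sum_abs_mul_le (p t i) (b t i ξ a) (hC t i ξ a)
    have h2 := hc t i si ξ a
    have h3 := hL (f t i si ξ a)
    simp only
    linarith
  -- The transport infimum is at most its value at any admissible flow.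
  have harc : ∀ (t : Fin T), ∀ r ∈ B, VA t.castSucc ≤
      (τ t r - ∑ i, ∑ h, p t i h * ∑ a, M i a * r a h) + VA t.succ := by
    intro t r hr
    rw [hVA]
    refine add_le_add_left (ciInf_le (f := fun r : ↥B =>
      τ t r.val - ∑ i, ∑ h, p t i h * ∑ a, M i a * r.val a h)
      ⟨-(∑ i, ∑ h, |p t i h| * ∑ a, |M i a| * D), ?_⟩ ⟨r, hr⟩) _
    rintro _ ⟨⟨r, hr⟩, rfl⟩
    have h1 : ∑ i, ∑ h, p t i h * ∑ a, M i a * r a h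
        ≤ ∑ i, ∑ h, |p t i h| * ∑ a, |M i a| * D := by
      refine Finset.sum_le_sum fun i _ => Finset.sum_le_sum fun h _ => ?_
      refine (le_abs_self _).trans ?_
      rw [abs_mul]
      refine mul_le_mul_of_nonneg_left ?_ (abs_nonneg _)
      refine (Finset.abs_sum_le_sum_abs _ _).trans (Finset.sum_le_sum fun a _ => ?_)
      rw [abs_mul]
      exact mul_le_mul_of_nonneg_left (hD r hr a h) (abs_nonneg _)
    have h2 := hτ t r
    simp only
    linarith
  simp only
  set x : (Fin T → Ξ) → ℕ → ∀ i, S i := fun ξ => mtraj f s0 ξ (fun t' => (π t' ξ).1) with hx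
  set w : (Fin T → Ξ) → ℝ := fun ξ => ∏ t, q t (ξ t) with hw
  have hw0 : ∀ ξ, 0 ≤ w ξ := fun ξ => Finset.prod_nonneg fun t _ => hq0 t (ξ t)
  have hw1 : ∑ ξ, w ξ = 1 := sum_weight_eq_one q hq1
  -- Nonanticipativity: the state at stage `t` does not see the noise of stage `t`.
  have hxup : ∀ (t : Fin T) ξ e, x (Function.update ξ t e) t = x ξ t := by
    intro t ξ e
    have hne : ∀ k : Fin T, (k : ℕ) < t → Function.update ξ t e k = ξ k := fun k hk =>
      Function.update_of_ne (Fin.ne_of_lt hk) _ _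
    refine mtraj_congr f s0 _ _ _ _ t hne fun k hk => ?_
    rw [hna k _ ξ fun j hj => hne j (lt_of_le_of_lt (Fin.le_def.mp hj) hk)]
  have hstep : ∀ t : Fin T,
      (∑ ξ, w ξ * (∑ i, V i t.castSucc (x ξ t i) + VA t.castSucc)) ≤
        (∑ ξ, w ξ * (∑ i, c t i (x ξ t i) (ξ t) ((π t ξ).1 i) + τ t (π t ξ).2)) +
        ∑ ξ, w ξ * (∑ i, V i t.succ (x ξ (t + 1) i) + VA t.succ) := by
    intro t
    have hres := sum_weight_resample q hq1 t (fun ξ => (∑ i, ⨅ a : U i,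
      (c t i (x ξ t i) (ξ t) a + (∑ h, p t i h * b t i (ξ t) a h)
        + V i t.succ (f t i (x ξ t i) (ξ t) a))) + VA t.castSucc)
    have hL : (∑ ξ, w ξ * (∑ i, V i t.castSucc (x ξ t i) + VA t.castSucc)) =
        ∑ ξ, w ξ * ((∑ i, ⨅ a : U i,
          (c t i (x ξ t i) (ξ t) a + (∑ h, p t i h * b t i (ξ t) a h)
            + V i t.succ (f t i (x ξ t i) (ξ t) a))) + VA t.castSucc) := by
      refine Eq.trans ?_ hres.symm
      refine Finset.sum_congr rfl fun ξ _ => ?_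
      simp only [hxup, Function.update_self, hw]
      congr 1
      simp only [mul_add, Finset.sum_add_distrib, ← Finset.sum_mul, hq1, one_mul, hV,
        Finset.mul_sum]
      rw [Finset.sum_comm]
    rw [hL, ← Finset.sum_add_distrib]
    refine Finset.sum_le_sum fun ξ _ => ?_
    rw [← mul_add]
    refine mul_le_mul_of_nonneg_left ?_ (hw0 ξ)
    have h1 := Finset.sum_le_sum fun i (_ : i ∈ Finset.univ) =>
      hnode i t (x ξ t i) (ξ t) ((π t ξ).1 i)
    have h2 := harc t _ (hπB t ξ)
    simp only [Finset.sum_add_distrib, hcpl] at h1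
    have h3 : ∀ i, x ξ (t + 1) i = f t i (x ξ t i) (ξ t) ((π t ξ).1 i) := fun i =>
      mtraj_succ f s0 ξ _ t i
    simp only [h3]
    linarith
  have htel := le_sum_add_last
    (fun t : Fin (T + 1) => ∑ ξ, w ξ * (∑ i, V i t (x ξ t i) + VA t)) _ hstep
  have h0 : ∀ ξ, x ξ 0 = s0 := fun ξ => rfl
  simp only [Fin.val_zero, h0, ← Finset.sum_mul, hw1, one_mul, Fin.val_last, hVT, hVAT,
    add_zero] at htel
  refine htel.trans (le_of_eq ?_)
  rw [Finset.sum_comm, ← Finset.sum_add_distrib]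
  refine Finset.sum_congr rfl fun ξ _ => ?_
  rw [← Finset.mul_sum, ← mul_add]
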